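/- Let f ∈ ℂ[x,y,z,w] be a reduced homogeneous polynomial of degree d defining a surface D: f = 0 in P³ which is tame with respect to a pair of syzygies ρ1, ρ2 of degrees e1 = deg ρ1 ≤ e2 = deg ρ2. Set e3 = d − 1 − e1 − e2 and assume e3 ≥ e2. Then for every integer k with 0 ≤ k < e3 + d − 1, the dimension of the degree-k part of the Milnor algebra satisfies m(f)_k = binom(k+3,3) − 4·binom(k−d+4,3) + binom(k−d−e1+4,3) + binom(k−d−e2+4,3), where binom(m,3) is understood to be 0 when m < 3. In particular these dimensions depend only on d, e1 and e2. -/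

import Mathlib

open MvPolynomial Matrix

noncomputable section

/-- The polynomial ring `S = ℂ[x,y,z,w]`. -/
abbrev S4 : Type := MvPolynomial (Fin 4) ℂ

/-- The `S`-linear map sending `ρ = (α,β,γ,δ)` to `α fₓ + β f_y + γ f_z + δ f_w`. -/
def jacPair (f : S4) : (Fin 4 → S4) →ₗ[S4] S4 where
  toFun ρ := ∑ i, ρ i * pderiv i f
  map_add' a b := by simp [add_mul, Finset.sum_add_distrib]
  map_smul' c a := by simp [Finset.mul_sum, mul_assoc]

/-- `AR(f)`: the `S`-module of all Jacobian syzygies of `f`. -/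
def AR4 (f : S4) : Submodule S4 (Fin 4 → S4) := LinearMap.ker (jacPair f)

/-- A vector of polynomials is homogeneous of degree `q` if each component is. -/
def VecHomog (ρ : Fin 4 → S4) (q : ℕ) : Prop := ∀ i, (ρ i).IsHomogeneous q

/-- `AR(f)_k`, the degree-`k` homogeneous part of `AR(f)`, as a `ℂ`-subspace. -/
def ARgr (f : S4) (k : ℕ) : Submodule ℂ (Fin 4 → S4) :=
  (AR4 f).restrictScalars ℂ ⊓ Submodule.pi Set.univ (fun _ => homogeneousSubmodule (Fin 4) ℂ k)

/-- `ar(f)_k = dim_ℂ AR(f)_k`. -/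
def arDim (f : S4) (k : ℕ) : ℕ := Module.finrank ℂ (ARgr f k)

/-- `ar(f)_q` for an integer index, with the convention that it vanishes for `q < 0`. -/
def arZ (f : S4) (q : ℤ) : ℕ := if 0 ≤ q then arDim f q.toNat else 0

/-- The Jacobian ideal of `f`. -/
def JacIdeal (f : S4) : Ideal S4 := Ideal.span (Set.range fun i : Fin 4 => pderiv i f)

/-- `m(f)_k = dim_ℂ M(f)_k`, the dimension of the degree-`k` part of the Milnor algebra. -/
def milnor4 (f : S4) (k : ℕ) : ℕ :=
  Module.finrank ℂ ((homogeneousSubmodule (Fin 4) ℂ k).map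
    (Submodule.mkQ ((JacIdeal f).restrictScalars ℂ)))

/-- `binom(m,3)` with the convention that it is `0` for `m < 3`. -/
def binom3 (m : ℤ) : ℕ := m.toNat.choose 3

/-- All four `3×3` minors of the `3×4` matrix with rows `ρ1, ρ2, ρ` vanish. -/
def MinorsVanish3 (ρ1 ρ2 ρ : Fin 4 → S4) : Prop :=
  ∀ j : Fin 4,
    (Matrix.of fun i k => ![ρ1, ρ2, ρ] i (j.succAbove k) : Matrix (Fin 3) (Fin 3) S4).det = 0

/-- `D : f = 0` is tame with respect to `ρ1, ρ2`: every homogeneous syzygy `ρ` for which all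
`3×3` minors of the matrix with rows `ρ1, ρ2, ρ` vanish lies in `S·ρ1 + S·ρ2`. -/
def TamePair (f : S4) (ρ1 ρ2 : Fin 4 → S4) : Prop :=
  ∀ ρ ∈ AR4 f, ∀ q : ℕ, VecHomog ρ q → MinorsVanish3 ρ1 ρ2 ρ →
    ∃ a b : S4, ρ = a • ρ1 + b • ρ2

/-- `ρ1` is a nonzero homogeneous syzygy of minimal degree `e1`, and `ρ2` is a homogeneous
syzygy of minimal degree `e2 ≥ e1` among the homogeneous syzygies not in `S·ρ1`. -/
def MinimalPair (f : S4) (ρ1 ρ2 : Fin 4 → S4) (e1 e2 : ℕ) : Prop :=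
  ρ1 ∈ AR4 f ∧ ρ1 ≠ 0 ∧ VecHomog ρ1 e1 ∧
  (∀ ρ ∈ AR4 f, ∀ q : ℕ, ρ ≠ 0 → VecHomog ρ q → e1 ≤ q) ∧
  ρ2 ∈ AR4 f ∧ VecHomog ρ2 e2 ∧ e1 ≤ e2 ∧ (∀ a : S4, ρ2 ≠ a • ρ1) ∧
  (∀ ρ ∈ AR4 f, ∀ q : ℕ, VecHomog ρ q → (∀ a : S4, ρ ≠ a • ρ1) → e2 ≤ q)

/-- `D : f = 0` is a free surface with exponents `d1 ≤ d2 ≤ d3`: `AR(f)` is a free graded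
`S`-module with a homogeneous basis of degrees `d1, d2, d3`. -/
def IsFreeWith (f : S4) (d1 d2 d3 : ℕ) : Prop :=
  d1 ≤ d2 ∧ d2 ≤ d3 ∧
  ∃ ρ1 ρ2 ρ3 : Fin 4 → S4,
    ρ1 ∈ AR4 f ∧ ρ2 ∈ AR4 f ∧ ρ3 ∈ AR4 f ∧
    VecHomog ρ1 d1 ∧ VecHomog ρ2 d2 ∧ VecHomog ρ3 d3 ∧
    (∀ ρ ∈ AR4 f, ∃ a b c : S4, ρ = a • ρ1 + b • ρ2 + c • ρ3) ∧
    (∀ a b c : S4, a • ρ1 + b • ρ2 + c • ρ3 = 0 → a = 0 ∧ b = 0 ∧ c = 0)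

/-- `D : f = 0` is a nearly free surface with exponents `d1 ≤ d2 ≤ d3` (`d4 = d3`):
`AR(f)` is generated by four homogeneous syzygies of degrees `d1, d2, d3, d3`,
with `d3 = d - (d1 + d2)`, whose module of relations is generated by a single relation
`a₁ρ₁ + a₂ρ₂ + a₃ρ₃ + a₄ρ₄ = 0` with `a₁, a₂, a₃, a₄` homogeneous of degrees
`d3-d1+1, d3-d2+1, 1, 1`. -/
def IsNearlyFreeWith (f : S4) (d d1 d2 d3 : ℕ) : Prop :=
  d1 ≤ d2 ∧ d2 ≤ d3 ∧ d1 + d2 + d3 = d ∧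
  ∃ (ρ : Fin 4 → Fin 4 → S4) (a : Fin 4 → S4),
    (∀ i, ρ i ∈ AR4 f) ∧
    VecHomog (ρ 0) d1 ∧ VecHomog (ρ 1) d2 ∧ VecHomog (ρ 2) d3 ∧ VecHomog (ρ 3) d3 ∧
    (∀ σ ∈ AR4 f, ∃ b : Fin 4 → S4, σ = ∑ i, b i • ρ i) ∧
    (a 0).IsHomogeneous (d3 - d1 + 1) ∧ (a 1).IsHomogeneous (d3 - d2 + 1) ∧
    (a 2).IsHomogeneous 1 ∧ (a 3).IsHomogeneous 1 ∧
    a ≠ 0 ∧ (∑ i, a i • ρ i) = 0 ∧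
    (∀ b : Fin 4 → S4, (∑ i, b i • ρ i) = 0 → ∃ c : S4, b = c • a)

/-- `D : f = 0` is tame: it is tame with respect to some pair `ρ1, ρ2` chosen as in the paper. -/
def IsTame (f : S4) : Prop :=
  ∃ (ρ1 ρ2 : Fin 4 → S4) (e1 e2 : ℕ), MinimalPair f ρ1 ρ2 e1 e2 ∧ TamePair f ρ1 ρ2

/-- The `4×4` matrix with rows the Euler vector field `(x,y,z,w)` and `ρ1, ρ2, ρ`. -/
def EMat (ρ1 ρ2 ρ : Fin 4 → S4) : Matrix (Fin 4) (Fin 4) S4 :=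
  Matrix.of ![fun i => X i, ρ1, ρ2, ρ]

/-!
Rank–nullity for the gradient map `(ρᵢ) ↦ ∑ ρᵢ fᵢ` expresses the Hilbert function of the Milnor
algebra through that of the syzygy module, so it suffices to know the syzygies of low degree.

In `n + 1` variables, put `n` homogeneous syzygies below the Euler field `(x₀, ..., xₙ)` to get a
square matrix with determinant `D`. The matrix sends the gradient of `f` to `(d f, 0, ..., 0)`, so
`f ∣ D fⱼ` for all `j` by Cramer's rule, and `f ∣ D` because `f` is squarefree. If the degrees of
the syzygies add up to less than `d - 1`, this forces `D = 0`, and the syzygies are dependent.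
Tameness then makes every syzygy of low degree a combination of the given ones. These are
themselves independent: otherwise tameness would put all Koszul syzygies, which have rank `n`,
in a module generated by `n - 1` elements. Low-degree syzygies thus form a free module on the given
ones, and their dimension is a sum of shifted binomial coefficients.
-/

section LinearAlgebra

theorem finrank_map_add_finrank_ker_inf {K V W : Type*} [DivisionRing K] [AddCommGroup V]
    [Module K V] [AddCommGroup W] [Module K W] (φ : V →ₗ[K] W) (U : Submodule K V)
    [FiniteDimensional K U] :
    Module.finrank K (U.map φ) + Module.finrank K ↥(LinearMap.ker φ ⊓ U) = Module.finrank K U := by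
  rw [← LinearMap.finrank_range_add_finrank_ker (φ.domRestrict U), LinearMap.range_domRestrict,
    LinearMap.ker_domRestrict, inf_comm, ← Submodule.map_comap_subtype,
    Submodule.finrank_map_subtype_eq]

/-- A product of submodules `p i`, as a submodule of the product of the ambient modules, is the
product of the modules `p i`; it gives the rank of such a submodule. -/
def piSubmoduleEquiv {R ι : Type*} {M : ι → Type*} [Semiring R] [∀ i, AddCommMonoid (M i)]
    [∀ i, Module R (M i)] (p : ∀ i, Submodule R (M i)) :
    Submodule.pi Set.univ p ≃ₗ[R] ∀ i, p i where
  toFun x i := ⟨x.1 i, x.2 i trivial⟩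
  invFun y := ⟨fun i ↦ y i, fun i _ ↦ (y i).2⟩
  map_add' _ _ := rfl
  map_smul' _ _ := rfl

theorem finrank_pi_univ {R ι : Type*} {M : ι → Type*} [Ring R] [StrongRankCondition R] [Fintype ι]
    [∀ i, AddCommGroup (M i)] [∀ i, Module R (M i)] (p : ∀ i, Submodule R (M i))
    [∀ i, Module.Free R (p i)] [∀ i, Module.Finite R (p i)] :
    Module.finrank R (Submodule.pi Set.univ p) = ∑ i, Module.finrank R (p i) := by
  rw [(piSubmoduleEquiv p).finrank_eq, Module.finrank_pi_fintype]

theorem map_linearCombination_pi_of_isProj {K S N ι : Type*} [CommSemiring K] [Semiring S]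
    [Algebra K S] [AddCommMonoid N] [Module K N] [Module S N] [IsScalarTower K S N] [Fintype ι]
    {v : ι → N} {P : Submodule K N} {π : N →ₗ[K] N} (hπ : LinearMap.IsProj P π)
    {Q : ι → Submodule K S} {p : ι → S →ₗ[K] S} (hp : ∀ i, LinearMap.IsProj (Q i) (p i))
    (h : ∀ i c, π (c • v i) = p i c • v i) :
    (Submodule.pi Set.univ Q).map ((Fintype.linearCombination S v).restrictScalars K) =
      (Submodule.span S (Set.range v)).restrictScalars K ⊓ P := by
  have hcomb (c : ι → S) : π (∑ i, c i • v i) = ∑ i, p i (c i) • v i := by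
    simp only [map_sum, h]
  rw [← Fintype.range_linearCombination]
  ext x
  constructor
  · rintro ⟨c, hc, rfl⟩
    refine ⟨⟨c, rfl⟩, ?_⟩
    change ∑ i, c i • v i ∈ P
    convert hπ.map_mem (∑ i, c i • v i) using 1
    rw [hcomb]
    exact Finset.sum_congr rfl fun i _ ↦ by rw [(hp i).map_id _ (hc i trivial)]
  · rintro ⟨⟨c, rfl⟩, hx⟩
    exact ⟨fun i ↦ p i (c i), fun i _ ↦ (hp i).map_mem _, (hcomb c).symm.trans (hπ.map_id _ hx)⟩

theorem isProj_compLeft {R N : Type*} [Semiring R] [AddCommMonoid N] [Module R N]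
    {P : Submodule R N} {π : N →ₗ[R] N} (hπ : LinearMap.IsProj P π) (κ : Type*) :
    LinearMap.IsProj (Submodule.pi Set.univ fun _ : κ ↦ P) (π.compLeft κ) where
  map_mem x j _ := hπ.map_mem (x j)
  map_id x hx := funext fun j ↦ hπ.map_id (x j) (hx j trivial)

theorem det_submatrix_eq_zero_of_not_linearIndependent {R m n : Type*} [CommRing R] [IsDomain R]
    [Fintype m] [DecidableEq m] {A : m → n → R} (hA : ¬LinearIndependent R A) (c : m → n) :
    ((Matrix.of A).submatrix id c).det = 0 := by
  by_contra hdet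
  exact hA <| .of_comp (LinearMap.funLeft R R c) <|
    Matrix.linearIndependent_rows_of_det_ne_zero hdet

theorem det_ne_zero_of_linearIndependent_rows {ι R : Type*} [Fintype ι] [DecidableEq ι]
    [CommRing R] [IsDomain R] {M : Matrix ι ι R} (h : LinearIndependent R M.row) : M.det ≠ 0 := by
  rw [Ne, ← exists_vecMul_eq_zero_iff]
  rintro ⟨v, hv0, hv⟩
  rw [vecMul_eq_sum] at hv
  exact hv0 (funext (Fintype.linearIndependent_iff.mp h v hv))

end LinearAlgebra

section Grading

variable {σ K : Type*}

theorem isProj_weightedHomogeneousComponent {M : Type*} [CommSemiring K] [AddCommMonoid M]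
    (w : σ → M) (m : M) :
    LinearMap.IsProj (weightedHomogeneousSubmodule K w m) (weightedHomogeneousComponent w m) where
  map_mem p := weightedHomogeneousComponent_mem w p m
  map_id _ := weightedHomogeneousComponent_eq_self

theorem weightedHomogeneousComponent_mul_of_isWeightedHomogeneous_right {M : Type*} [CommSemiring K]
    [AddCommGroup M] {w : σ → M} {g : MvPolynomial σ K} {e : M} (hg : IsWeightedHomogeneous w g e)
    (m : M) (c : MvPolynomial σ K) :
    weightedHomogeneousComponent w m (c * g) = weightedHomogeneousComponent w (m - e) c * g := by
  classical
  induction c using MvPolynomial.induction_on' with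
  | monomial u r =>
    have hu := isWeightedHomogeneous_monomial w u r rfl
    rw [weightedHomogeneousComponent_of_mem (hu.mul hg), weightedHomogeneousComponent_of_mem hu,
      ite_mul, zero_mul]
    simp only [sub_eq_iff_eq_add]
  | add p q hp hq => simp only [add_mul, map_add, hp, hq]

/-- The homogeneous polynomials of degree `m`, for an integer `m`: this is `0` when `m < 0`. -/
abbrev degreePart (σ K : Type*) [CommSemiring K] (m : ℤ) : Submodule K (MvPolynomial σ K) :=
  weightedHomogeneousSubmodule K (1 : σ → ℤ) m

section

variable [CommSemiring K]

theorem weight_one_apply {R : Type*} [Semiring R] (u : σ →₀ ℕ) :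
    Finsupp.weight (1 : σ → R) u = (u.degree : R) := by
  simp [Finsupp.weight_apply, Finsupp.degree_apply, Finsupp.sum]

theorem isWeightedHomogeneous_one_int_iff {p : MvPolynomial σ K} {n : ℕ} :
    IsWeightedHomogeneous (1 : σ → ℤ) p n ↔ p.IsHomogeneous n := by
  simp only [IsHomogeneous, IsWeightedHomogeneous, weight_one_apply, Nat.cast_inj, Nat.cast_id]

theorem degreePart_natCast (n : ℕ) : degreePart σ K n = homogeneousSubmodule σ K n :=
  Submodule.ext fun _ ↦ isWeightedHomogeneous_one_int_iff

theorem degreePart_of_neg {m : ℤ} (hm : m < 0) : degreePart σ K m = ⊥ := by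
  rw [Submodule.eq_bot_iff]
  intro p hp
  ext u
  by_contra hu
  have := hp hu
  rw [weight_one_apply] at this
  omega

instance [Finite σ] (m : ℤ) : Module.Finite K (degreePart σ K m) := by
  obtain hm | hm := lt_or_ge m 0
  · rw [degreePart_of_neg hm]
    infer_instance
  · lift m to ℕ using hm
    rw [degreePart_natCast]
    exact Module.Finite.iff_fg.mpr (homogeneousSubmodule_fg _ _ _)

end

/-- The vectors of `κ`-many homogeneous polynomials of degree `m`. -/
abbrev vectorDegreePart (σ K κ : Type*) [CommSemiring K] (m : ℤ) :
    Submodule K (κ → MvPolynomial σ K) :=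
  Submodule.pi Set.univ fun _ ↦ degreePart σ K m

instance [CommSemiring K] [Finite σ] {κ : Type*} [Finite κ] (m : ℤ) :
    Module.Finite K (vectorDegreePart σ K κ m) :=
  Module.Finite.equiv (piSubmoduleEquiv _).symm

theorem finrank_homogeneousSubmodule_fin [CommRing K] [Nontrivial K] (n m : ℕ) :
    Module.finrank K (homogeneousSubmodule (Fin (n + 1)) K m) = (m + n).choose n := by
  have hsupp : {u : Fin (n + 1) →₀ ℕ | u.degree = m} =
      ((Finset.univ : Finset (Fin (n + 1))).finsuppAntidiag m : Set (Fin (n + 1) →₀ ℕ)) := by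
    ext u
    simp [Finsupp.degree_eq_sum]
  rw [homogeneousSubmodule_eq_finsupp_supported, hsupp,
    (AddMonoidAlgebra.supportedEquivFinsupp (R := K) (S := K) _).finrank_eq,
    Module.finrank_finsupp_self, ← Nat.card_eq_fintype_card, Nat.card_coe_set_eq,
    Set.ncard_coe_finset, Finset.card_finsuppAntidiag_nat_eq_choose, Finset.card_univ,
    Fintype.card_fin, show n + 1 + m - 1 = m + n by omega, Nat.choose_symm_add]

theorem finrank_degreePart_fin [CommRing K] [Nontrivial K] (n : ℕ) (m : ℤ) :
    Module.finrank K (degreePart (Fin (n + 2)) K m) = (m + (n + 1)).toNat.choose (n + 1) := by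
  obtain hm | hm := lt_or_ge m 0
  · rw [degreePart_of_neg hm, finrank_bot, Nat.choose_eq_zero_of_lt (by omega)]
  · lift m to ℕ using hm
    rw [degreePart_natCast, finrank_homogeneousSubmodule_fin]
    congr 1

theorem isHomogeneous_det {ι : Type*} [CommRing K] [Fintype ι] [DecidableEq ι]
    {M : Matrix ι ι (MvPolynomial σ K)} {e : ι → ℕ} (h : ∀ i j, (M i j).IsHomogeneous (e i)) :
    M.det.IsHomogeneous (∑ i, e i) := by
  rw [← det_transpose, det_apply]
  refine IsHomogeneous.sum _ _ _ fun π _ ↦ ?_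
  exact (homogeneousSubmodule σ K _).smul_of_tower_mem _
    (IsHomogeneous.prod _ _ _ fun i _ ↦ h i (π i))

end Grading

section Derivatives

variable {σ K : Type*} [Field K]

theorem totalDegree_eq_zero_of_pderiv_eq_zero {R : Type*} [CommRing R] [IsDomain R] [CharZero R]
    {p : MvPolynomial σ R} (h : ∀ i, pderiv i p = 0) : p.totalDegree = 0 := by
  rw [totalDegree_eq_zero_iff]
  intro u hu i
  by_contra hi
  have hcancel : u - Finsupp.single i 1 + Finsupp.single i 1 = u :=
    tsub_add_cancel_of_le (by simpa using Nat.one_le_iff_ne_zero.mpr hi)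
  have hcoeff := coeff_pderiv (i := i) p (u - Finsupp.single i 1)
  rw [h i, hcancel, coeff_zero] at hcoeff
  exact mul_ne_zero (mem_support_iff.mp hu) (Nat.cast_add_one_ne_zero _) hcoeff.symm

theorem totalDegree_pderiv_lt {R : Type*} [CommRing R] {p : MvPolynomial σ R} {i : σ}
    (h : pderiv i p ≠ 0) : (pderiv i p).totalDegree < p.totalDegree := by
  obtain ⟨u, hu, hdeg⟩ :=
    Finset.exists_mem_eq_sup _ (support_nonempty.mpr h) fun u ↦ u.sum fun _ e ↦ e
  have hu' : u + Finsupp.single i 1 ∈ p.support := by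
    rw [mem_support_iff, coeff_pderiv] at hu
    exact mem_support_iff.mpr (left_ne_zero_of_mul hu)
  calc (pderiv i p).totalDegree = u.sum fun _ e ↦ e := hdeg
    _ < (u + Finsupp.single i 1).sum fun _ e ↦ e := by
      rw [Finsupp.sum_add_index' (by simp) (by simp), Finsupp.sum_single_index rfl]
      exact Nat.lt_succ_self _
    _ ≤ p.totalDegree := le_totalDegree hu'

theorem pderiv_eq_zero_of_dvd {R : Type*} [CommRing R] [IsDomain R] {p : MvPolynomial σ R} {i : σ}
    (h : p ∣ pderiv i p) : pderiv i p = 0 := by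
  by_contra h0
  exact (totalDegree_pderiv_lt h0).not_ge (totalDegree_le_of_dvd_of_isDomain h h0)

theorem exists_not_dvd_pderiv_of_irreducible [CharZero K] {p : MvPolynomial σ K}
    (hp : Irreducible p) : ∃ i, ¬p ∣ pderiv i p := by
  by_contra! h
  have hC := totalDegree_eq_zero_iff_eq_C.mp
    (totalDegree_eq_zero_of_pderiv_eq_zero fun i ↦ pderiv_eq_zero_of_dvd (h i))
  have h0 : coeff 0 p ≠ 0 := fun h0 ↦ hp.ne_zero (by rw [hC, h0, C_0])
  exact hp.not_isUnit (hC ▸ (isUnit_iff_ne_zero.mpr h0).map C)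

theorem exists_not_dvd_pderiv_of_squarefree [CharZero K] {f p : MvPolynomial σ K}
    (hf : Squarefree f) (hp : Irreducible p) (hpf : p ∣ f) : ∃ i, ¬p ∣ pderiv i f := by
  obtain ⟨g, rfl⟩ := hpf
  have hpg : ¬p ∣ g := fun h ↦ hp.not_isUnit (hf p (mul_dvd_mul_left p h))
  obtain ⟨i, hi⟩ := exists_not_dvd_pderiv_of_irreducible hp
  refine ⟨i, fun h ↦ ?_⟩
  rw [pderiv_mul] at h
  exact (hp.prime.dvd_or_dvd ((dvd_add_left (dvd_mul_right _ _)).mp h)).elim hi hpg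

theorem dvd_of_dvd_mul_pderiv [CharZero K] {f D : MvPolynomial σ K} (hf : Squarefree f)
    (h : ∀ i, f ∣ D * pderiv i f) : f ∣ D := by
  obtain ⟨u, v, c, huv, rfl, rfl⟩ :=
    UniqueFactorizationMonoid.exists_reduced_factors f hf.ne_zero D
  have hc : c ≠ 0 := left_ne_zero_of_mul hf.ne_zero
  have hu : ∀ i, u ∣ pderiv i (c * u) := fun i ↦ by
    have hi := h i
    rw [mul_assoc, mul_dvd_mul_iff_left hc] at hi
    exact huv.dvd_of_dvd_mul_left hi
  have hunit : IsUnit u := by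
    by_contra hunit
    obtain ⟨p, hp, hpu⟩ :=
      WfDvdMonoid.exists_irreducible_factor hunit (right_ne_zero_of_mul hf.ne_zero)
    obtain ⟨i, hi⟩ := exists_not_dvd_pderiv_of_squarefree hf hp (dvd_mul_of_dvd_right hpu c)
    exact hi (hpu.trans (hu i))
  exact mul_dvd_mul_left c hunit.dvd

end Derivatives

section Syzygies

variable {σ R K : Type*} [CommRing R] [Field K]

/-- The relation `fⱼ fᵢ - fᵢ fⱼ = 0` between two partial derivatives of `f`. -/
def koszulSyzygy [DecidableEq σ] (f : MvPolynomial σ R) (i j : σ) : σ → MvPolynomial σ R :=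
  Pi.single i (pderiv j f) - Pi.single j (pderiv i f)

theorem isHomogeneous_koszulSyzygy [DecidableEq σ] {f : MvPolynomial σ R} {d : ℕ}
    (hf : f.IsHomogeneous d) (i j l : σ) : (koszulSyzygy f i j l).IsHomogeneous (d - 1) := by
  have hsingle (i j l : σ) :
      (Pi.single i (pderiv j f) : σ → MvPolynomial σ R) l |>.IsHomogeneous (d - 1) := by
    rw [Pi.single_apply]
    split_ifs
    exacts [hf.pderiv, isHomogeneous_zero _ _ _]
  exact (hsingle i j l).sub (hsingle j i l)

theorem linearIndependent_koszulSyzygy [IsDomain R] [DecidableEq σ] {f : MvPolynomial σ R} {i : σ}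
    (hi : pderiv i f ≠ 0) :
    LinearIndependent (MvPolynomial σ R) fun j : {j // j ≠ i} ↦ koszulSyzygy f i j := by
  rw [linearIndependent_iff']
  intro s c hc j hjs
  have hj := congrFun hc j
  simp only [Finset.sum_apply, Pi.smul_apply, koszulSyzygy, Pi.sub_apply,
    Pi.single_eq_of_ne j.2, zero_sub, smul_eq_mul, mul_neg, Finset.sum_neg_distrib,
    Pi.single_apply, Subtype.coe_inj, mul_ite, mul_zero, Finset.sum_ite_eq, hjs,
    if_true, Pi.zero_apply, neg_eq_zero] at hj
  exact (mul_eq_zero.mp hj).resolve_right hi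

/-- The ideal generated by the partial derivatives of `f`. -/
def jacobianIdeal (f : MvPolynomial σ R) : Ideal (MvPolynomial σ R) :=
  Ideal.span (Set.range fun i ↦ pderiv i f)

/-- The dimension of the degree-`k` part of the Milnor algebra of `f`. -/
def milnorDim (f : MvPolynomial σ R) (k : ℕ) : ℕ :=
  Module.finrank R ((homogeneousSubmodule σ R k).map
    (Submodule.mkQ ((jacobianIdeal f).restrictScalars R)))

theorem milnorDim_add_finrank_jacobianIdeal [Finite σ] (f : MvPolynomial σ K) (k : ℕ) :
    milnorDim f k +
        Module.finrank K ↥((jacobianIdeal f).restrictScalars K ⊓ degreePart σ K k) =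
      Module.finrank K (degreePart σ K k) := by
  have h := finrank_map_add_finrank_ker_inf
    (Submodule.mkQ ((jacobianIdeal f).restrictScalars K)) (degreePart σ K k)
  rw [Submodule.ker_mkQ] at h
  rw [← h, degreePart_natCast]
  rfl

section Fintype

variable [Fintype σ]

/-- The pairing `ρ ↦ ∑ ρᵢ fᵢ` of a vector of polynomials with the gradient of `f`. -/
def gradientPairing (f : MvPolynomial σ R) :
    (σ → MvPolynomial σ R) →ₗ[MvPolynomial σ R] MvPolynomial σ R :=
  Fintype.linearCombination (MvPolynomial σ R) fun i ↦ pderiv i f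

/-- The module `AR(f)` of Jacobian syzygies of `f`. -/
def jacobianSyzygies (f : MvPolynomial σ R) : Submodule (MvPolynomial σ R) (σ → MvPolynomial σ R) :=
  LinearMap.ker (gradientPairing f)

theorem mem_jacobianSyzygies {f : MvPolynomial σ R} {ρ : σ → MvPolynomial σ R} :
    ρ ∈ jacobianSyzygies f ↔ ∑ i, ρ i * pderiv i f = 0 :=
  Iff.rfl

theorem map_gradientPairing_vectorDegreePart {f : MvPolynomial σ R} {d : ℕ}
    (hf : f.IsHomogeneous d) (m : ℤ) :
    (vectorDegreePart σ R σ (m - (d - 1))).map ((gradientPairing f).restrictScalars R) =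
      (jacobianIdeal f).restrictScalars R ⊓ degreePart σ R m := by
  have hf' : IsWeightedHomogeneous (1 : σ → ℤ) f d := isWeightedHomogeneous_one_int_iff.mpr hf
  exact map_linearCombination_pi_of_isProj (K := R) (v := fun i ↦ pderiv i f)
    (isProj_weightedHomogeneousComponent _ m) (fun _ ↦ isProj_weightedHomogeneousComponent _ _)
    fun i c ↦ weightedHomogeneousComponent_mul_of_isWeightedHomogeneous_right
      (hf'.pderiv (sub_add_cancel _ _)) m c

theorem finrank_jacobianIdeal_add_finrank_syzygies {f : MvPolynomial σ K} {d : ℕ}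
    (hf : f.IsHomogeneous d) (m : ℤ) :
    Module.finrank K ↥((jacobianIdeal f).restrictScalars K ⊓ degreePart σ K m) +
        Module.finrank K ↥((jacobianSyzygies f).restrictScalars K ⊓
          vectorDegreePart σ K σ (m - (d - 1))) =
      Fintype.card σ * Module.finrank K (degreePart σ K (m - (d - 1))) := by
  have h := finrank_map_add_finrank_ker_inf ((gradientPairing f).restrictScalars K)
    (vectorDegreePart σ K σ (m - (d - 1)))
  rw [map_gradientPairing_vectorDegreePart hf, finrank_pi_univ, Finset.sum_const, Finset.card_univ,
    smul_eq_mul] at h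
  exact h

theorem koszulSyzygy_mem [DecidableEq σ] (f : MvPolynomial σ R) (i j : σ) :
    koszulSyzygy f i j ∈ jacobianSyzygies f := by
  simp only [mem_jacobianSyzygies, koszulSyzygy, Pi.sub_apply, sub_mul, Finset.sum_sub_distrib,
    Pi.single_apply, ite_mul, zero_mul, Finset.sum_ite_eq', Finset.mem_univ, if_true]
  ring

end Fintype

variable {n d : ℕ}

theorem dvd_det_vecCons_X_mul_pderiv {f : MvPolynomial (Fin (n + 1)) R}
    (hf : f.IsHomogeneous d) {τ : Fin n → Fin (n + 1) → MvPolynomial (Fin (n + 1)) R}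
    (hτ : ∀ i, τ i ∈ jacobianSyzygies f) (j : Fin (n + 1)) :
    f ∣ (Matrix.of (vecCons X τ)).det * pderiv j f := by
  set M := Matrix.of (vecCons X τ)
  have hM : M *ᵥ (fun j ↦ pderiv j f) = Pi.single 0 (d • f) := by
    funext i
    refine Fin.cases ?_ (fun i ↦ ?_) i
    · exact hf.sum_X_mul_pderiv
    · exact hτ i
  have hcramer : M.det • (fun j ↦ pderiv j f) = M.adjugate *ᵥ Pi.single 0 (d • f) := by
    rw [← hM, mulVec_mulVec, adjugate_mul, smul_mulVec, one_mulVec]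
  have hj := congrFun hcramer j
  rw [mulVec_single] at hj
  have hj' : M.det * pderiv j f = M.adjugate j 0 * (d • f) := hj
  exact hj' ▸ (dvd_smul_of_dvd d dvd_rfl).mul_left _

theorem linearIndependent_vecCons_X [IsDomain R] [CharZero R] {n m : ℕ}
    {f : MvPolynomial (Fin n) R} (hf : f.IsHomogeneous d) (hd : d ≠ 0) (hf0 : f ≠ 0)
    {τ : Fin m → Fin n → MvPolynomial (Fin n) R} (hτ : ∀ i, τ i ∈ jacobianSyzygies f)
    (hli : LinearIndependent (MvPolynomial (Fin n) R) τ) :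
    LinearIndependent (MvPolynomial (Fin n) R) (vecCons X τ) := by
  refine hli.finCons' X τ fun c y hy h ↦ ?_
  have hpair : gradientPairing f y = 0 :=
    Submodule.span_le.mpr (Set.range_subset_iff.mpr hτ) hy
  have hEuler : gradientPairing f X = d • f := hf.sum_X_mul_pderiv
  have hc := congrArg (gradientPairing f) h
  rw [map_add, map_smul, hpair, hEuler, add_zero, map_zero, smul_eq_mul] at hc
  exact (mul_eq_zero.mp hc).resolve_right (smul_ne_zero hd hf0)

theorem not_linearIndependent_of_sum_degrees_lt [CharZero K]
    {f : MvPolynomial (Fin (n + 1)) K} (hf : f.IsHomogeneous d) (hsq : Squarefree f)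
    {τ : Fin n → Fin (n + 1) → MvPolynomial (Fin (n + 1)) K} {e : Fin n → ℕ}
    (hτ : ∀ i, τ i ∈ jacobianSyzygies f) (hdeg : ∀ i j, (τ i j).IsHomogeneous (e i))
    (hsum : ∑ i, e i + 1 < d) :
    ¬LinearIndependent (MvPolynomial (Fin (n + 1)) K) τ := by
  intro hli
  have hdet : (Matrix.of (vecCons X τ)).det ≠ 0 := det_ne_zero_of_linearIndependent_rows <|
    linearIndependent_vecCons_X hf (by omega) hsq.ne_zero hτ hli
  have hhom : (Matrix.of (vecCons X τ)).det.IsHomogeneous (∑ i, vecCons 1 e i) :=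
    isHomogeneous_det <| Fin.cases (fun j ↦ isHomogeneous_X K j) hdeg
  have hle := totalDegree_le_of_dvd_of_isDomain
    (dvd_of_dvd_mul_pderiv hsq (dvd_det_vecCons_X_mul_pderiv hf hτ)) hdet
  rw [hf.totalDegree hsq.ne_zero, hhom.totalDegree hdet, Fin.sum_univ_succ] at hle
  simp only [cons_val_zero, cons_val_succ] at hle
  omega

end Syzygies

section Tame

variable {K : Type*} [Field K] {n d : ℕ} {f : MvPolynomial (Fin (n + 2)) K}
  {ρ : Fin n → Fin (n + 2) → MvPolynomial (Fin (n + 2)) K} {e : Fin n → ℕ}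

/-- The hypersurface `f = 0` in `Pⁿ⁺¹` is tame with respect to the homogeneous syzygies `ρ i` of
degrees `e i`: a homogeneous syzygy that is linearly dependent on the `ρ i` over the polynomial
ring is already a combination of them. Linear dependence replaces the vanishing of the maximal
minors of the matrix with rows `τ, ρ 0, ..., ρ (n - 1)`. -/
structure IsTameSystem (f : MvPolynomial (Fin (n + 2)) K)
    (ρ : Fin n → Fin (n + 2) → MvPolynomial (Fin (n + 2)) K) (e : Fin n → ℕ) : Prop where
  mem_syzygies : ∀ i, ρ i ∈ jacobianSyzygies f
  isHomogeneous : ∀ i j, (ρ i j).IsHomogeneous (e i)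
  mem_span : ∀ τ ∈ jacobianSyzygies f, ∀ q, (∀ j, (τ j).IsHomogeneous q) →
    ¬LinearIndependent (MvPolynomial (Fin (n + 2)) K) (vecCons τ ρ) →
    τ ∈ Submodule.span (MvPolynomial (Fin (n + 2)) K) (Set.range ρ)

namespace IsTameSystem

theorem linearIndependent [CharZero K] (h : IsTameSystem f ρ e) (hf : f.IsHomogeneous d)
    (hd : d ≠ 0) (hf0 : f ≠ 0) : LinearIndependent (MvPolynomial (Fin (n + 2)) K) ρ := by
  by_contra hdep
  obtain ⟨i, hi⟩ : ∃ i, pderiv i f ≠ 0 := by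
    by_contra! hzero
    exact hd ((hf.totalDegree hf0).symm.trans (totalDegree_eq_zero_of_pderiv_eq_zero hzero))
  have hspan : Set.range (fun j : {j // j ≠ i} ↦ koszulSyzygy f i j) ≤
      Submodule.span (MvPolynomial (Fin (n + 2)) K) (Set.range ρ) := by
    rintro _ ⟨j, rfl⟩
    exact h.mem_span _ (koszulSyzygy_mem f i j) (d - 1) (isHomogeneous_koszulSyzygy hf i j)
      fun hli ↦ hdep (hli.comp Fin.succ (Fin.succ_injective n))
  have hcard : n + 1 ≤ n := calc
    n + 1 = Fintype.card {j // j ≠ i} := by simp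
    _ = (Set.range fun j : {j // j ≠ i} ↦ koszulSyzygy f i j).finrank
        (MvPolynomial (Fin (n + 2)) K) :=
      (finrank_span_eq_card (linearIndependent_koszulSyzygy hi)).symm
    _ ≤ (Set.range ρ).finrank (MvPolynomial (Fin (n + 2)) K) :=
      Submodule.finrank_mono (Submodule.span_le.mpr hspan)
    _ ≤ n := by simpa using finrank_range_le_card ρ
  omega

theorem syzygies_inf_vectorDegreePart [CharZero K] (h : IsTameSystem f ρ e)
    (hf : f.IsHomogeneous d) (hsq : Squarefree f) {q : ℤ} (hq : q + ∑ i, e i + 1 < d) :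
    (jacobianSyzygies f).restrictScalars K ⊓ vectorDegreePart (Fin (n + 2)) K (Fin (n + 2)) q =
      (Submodule.span (MvPolynomial (Fin (n + 2)) K) (Set.range ρ)).restrictScalars K ⊓
        vectorDegreePart (Fin (n + 2)) K (Fin (n + 2)) q := by
  refine le_antisymm (fun τ hτ ↦ ⟨?_, hτ.2⟩) (inf_le_inf_right _ <|
    Submodule.span_le.mpr (Set.range_subset_iff.mpr h.mem_syzygies))
  obtain ⟨hsyz, hdeg⟩ := hτ
  obtain hneg | hnonneg := lt_or_ge q 0
  · simp only [vectorDegreePart, degreePart_of_neg hneg, Submodule.pi_univ_bot] at hdeg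
    exact (Submodule.mem_bot K).mp hdeg ▸ zero_mem _
  · lift q to ℕ using hnonneg
    have hhom (j) : (τ j).IsHomogeneous q :=
      isWeightedHomogeneous_one_int_iff.mp (hdeg j trivial)
    refine h.mem_span τ hsyz q hhom ?_
    refine not_linearIndependent_of_sum_degrees_lt (e := vecCons q e) hf hsq
      (Fin.cases hsyz h.mem_syzygies) (Fin.cases hhom h.isHomogeneous) ?_
    rw [Fin.sum_univ_succ]
    simp only [cons_val_zero, cons_val_succ]
    exact_mod_cast hq

theorem finrank_span_inf_vectorDegreePart (h : IsTameSystem f ρ e)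
    (hli : LinearIndependent (MvPolynomial (Fin (n + 2)) K) ρ) (q : ℤ) :
    Module.finrank K ↥((Submodule.span (MvPolynomial (Fin (n + 2)) K)
        (Set.range ρ)).restrictScalars K ⊓ vectorDegreePart (Fin (n + 2)) K (Fin (n + 2)) q) =
      ∑ i, Module.finrank K (degreePart (Fin (n + 2)) K (q - e i)) := by
  have hinj : Function.Injective
      ((Fintype.linearCombination (MvPolynomial (Fin (n + 2)) K) ρ).restrictScalars K) :=
    hli.fintypeLinearCombination_injective
  have hmap := map_linearCombination_pi_of_isProj (K := K) (v := ρ)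
    (isProj_compLeft (isProj_weightedHomogeneousComponent _ q) _)
    (fun i ↦ isProj_weightedHomogeneousComponent _ (q - e i))
    fun i c ↦ funext fun j ↦ weightedHomogeneousComponent_mul_of_isWeightedHomogeneous_right
      (isWeightedHomogeneous_one_int_iff.mpr (h.isHomogeneous i j)) q c
  rw [← hmap, ← finrank_pi_univ]
  exact (Submodule.equivMapOfInjective _ hinj _).finrank_eq.symm

end IsTameSystem

theorem thm_1_3_part1_general [CharZero K] {k : ℕ} (hf : f.IsHomogeneous d) (hsq : Squarefree f)
    (h : IsTameSystem f ρ e) (hk : k + ∑ i, e i + 2 < 2 * d) :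
    (milnorDim f k : ℤ) = ((k + (n + 1)).choose (n + 1) : ℤ) -
      (n + 2) * ((k - d + (n + 2) : ℤ).toNat.choose (n + 1)) +
        ∑ i, ((k - d - e i + (n + 2) : ℤ).toNat.choose (n + 1) : ℤ) := by
  have hmilnor := milnorDim_add_finrank_jacobianIdeal f k
  have hjacobian := finrank_jacobianIdeal_add_finrank_syzygies hf k
  have hq : (k : ℤ) - (d - 1) + ∑ i, e i + 1 < d := by omega
  rw [h.syzygies_inf_vectorDegreePart hf hsq hq,
    h.finrank_span_inf_vectorDegreePart (h.linearIndependent hf (by omega) hsq.ne_zero)]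
    at hjacobian
  have hshift : (k : ℤ) - (d - 1) + (n + 1) = k - d + (n + 2) := by ring
  have hshift' (i) : (k : ℤ) - (d - 1) - e i + (n + 1) = k - d - e i + (n + 2) := by ring
  have htoNat : ((k : ℤ) + (n + 1)).toNat = k + (n + 1) := rfl
  simp only [finrank_degreePart_fin, htoNat] at hmilnor
  simp only [finrank_degreePart_fin, Fintype.card_fin, hshift, hshift'] at hjacobian
  zify at hmilnor hjacobian
  linarith

end Tame

theorem minorsVanish3_of_not_linearIndependent {ρ1 ρ2 τ : Fin 4 → S4}
    (h : ¬LinearIndependent S4 ![τ, ρ1, ρ2]) : MinorsVanish3 ρ1 ρ2 τ := by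
  have hrotate : ![τ, ρ1, ρ2] ∘ finRotate 3 = ![ρ1, ρ2, τ] := by
    ext i
    fin_cases i <;> rfl
  exact fun j ↦ det_submatrix_eq_zero_of_not_linearIndependent
    (mt (linearIndependent_equiv' (finRotate 3) hrotate).mp h) j.succAbove

theorem isTameSystem_of_tamePair {f : S4} {ρ1 ρ2 : Fin 4 → S4} {e1 e2 : ℕ}
    (h1 : ρ1 ∈ AR4 f) (hdeg1 : VecHomog ρ1 e1) (h2 : ρ2 ∈ AR4 f) (hdeg2 : VecHomog ρ2 e2)
    (htame : TamePair f ρ1 ρ2) : IsTameSystem f ![ρ1, ρ2] ![e1, e2] where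
  mem_syzygies := Fin.forall_fin_two.mpr ⟨h1, h2⟩
  isHomogeneous := Fin.forall_fin_two.mpr ⟨hdeg1, hdeg2⟩
  mem_span τ hτ q hq hdep := by
    obtain ⟨a, b, rfl⟩ := htame τ hτ q hq (minorsVanish3_of_not_linearIndependent hdep)
    rw [range_cons_cons_empty]
    exact Submodule.mem_span_pair.mpr ⟨a, b, rfl⟩

/-- **Theorem 1.3 (1).** For a tame surface `D : f = 0` with syzygy degrees `e1 ≤ e2`,
`e3 = d - 1 - e1 - e2 ≥ e2`, and any `k < e3 + d - 1`, the dimension of the degree-`k`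
piece of the Milnor algebra is given by a binomial formula depending only on `d, e1, e2`. -/
theorem thm_1_3_part1 (f : S4) (d e1 e2 e3 : ℕ) (ρ1 ρ2 : Fin 4 → S4)
    (hd : 1 ≤ d) (hf : f.IsHomogeneous d) (hred : Squarefree f)
    (hmin : MinimalPair f ρ1 ρ2 e1 e2) (htame : TamePair f ρ1 ρ2)
    (he3 : e1 + e2 + e3 + 1 = d) (he23 : e2 ≤ e3) :
    ∀ k : ℕ, (k : ℤ) < (e3 : ℤ) + d - 1 →
      (milnor4 f k : ℤ) =
        (binom3 ((k : ℤ) + 3) : ℤ) - 4 * binom3 ((k : ℤ) - d + 4) +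
          ((binom3 ((k : ℤ) - d - e1 + 4) : ℤ) + (binom3 ((k : ℤ) - d - e2 + 4) : ℤ)) := by
  intro k hk
  obtain ⟨h1, -, hdeg1, -, h2, hdeg2, -⟩ := hmin
  have hbound : k + ∑ i, ![e1, e2] i + 2 < 2 * d := by
    simp only [Fin.sum_univ_two, cons_val_zero, cons_val_one]
    omega
  have hdim := thm_1_3_part1_general hf hred
    (isTameSystem_of_tamePair h1 hdeg1 h2 hdeg2 htame) hbound
  rw [Fin.sum_univ_two] at hdim
  exact hdim
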